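/- The limit lim_{n→∞} (log Per_n(g_A))/n exists and equals log λ. -/

import Mathlib

open Matrix

/-- The 2-torus ℝ²/ℤ². -/
abbrev Torus : Type := AddCircle (1:ℝ) × AddCircle (1:ℝ)

/-- The quotient map ℝ² → 𝕋². -/
noncomputable def torusMk (v : ℝ × ℝ) : Torus := (↑v.1, ↑v.2)

/-- The linear action of an integer matrix `A ∈ SL(2,ℤ)` on ℝ². -/
noncomputable def matAct (A : Matrix.SpecialLinearGroup (Fin 2) ℤ) (v : ℝ × ℝ) : ℝ × ℝ :=
  ((A.1 0 0 : ℤ) * v.1 + (A.1 0 1 : ℤ) * v.2,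
   (A.1 1 0 : ℤ) * v.1 + (A.1 1 1 : ℤ) * v.2)

/-!
The number of periodic points can be computed exactly: `Per_n(g_A) = |tr Aⁿ|` for `n ≥ 1`. A point
`π x` is fixed by `g_Aⁿ` iff `Aⁿ x = x` or `Aⁿ x = -x`. Summing over the fibres of `π`, every fixed
point is counted twice among the solutions of these two equations: a fibre `{x, -x}` with two
elements solves exactly one of them, and a fibre with one element solves both. By the snake lemma
for `ℤ² → ℝ² → 𝕋²`, the equations have `|det (Aⁿ - 1)| = |2 - tr Aⁿ|` and
`|det (Aⁿ + 1)| = |2 + tr Aⁿ|` solutions, whose half sum is `|tr Aⁿ| = λⁿ + λ⁻ⁿ`.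
-/

open Filter Topology
open scoped Matrix.Module

section UnitTorus

variable {ι : Type*}

/-- The projection `ℝ^ι → (ℝ/ℤ)^ι` onto the torus of dimension `ι`. -/
def unitTorusProj : (ι → ℝ) →+ (ι → UnitAddCircle) :=
  (QuotientAddGroup.mk' _).compLeft ι

lemma unitTorusProj_apply (v : ι → ℝ) (i : ι) : unitTorusProj v i = (v i : UnitAddCircle) :=
  rfl

lemma unitTorusProj_surjective : Function.Surjective (unitTorusProj (ι := ι)) :=
  QuotientAddGroup.mk_surjective.comp_left

lemma unitTorusProj_eq_zero_iff {v : ι → ℝ} :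
    unitTorusProj v = 0 ↔ ∃ m : ι → ℤ, (fun i ↦ (m i : ℝ)) = v := by
  simp only [funext_iff, unitTorusProj_apply, Pi.zero_apply, AddCircle.coe_eq_zero_iff,
    zsmul_eq_mul, mul_one, Classical.skolem]

variable [Fintype ι]

lemma map_intCast_mulVec (M : Matrix ι ι ℤ) (m : ι → ℤ) :
    (fun i ↦ ((M *ᵥ m) i : ℝ)) = M.map (Int.cast : ℤ → ℝ) *ᵥ fun i ↦ (m i : ℝ) :=
  funext ((Int.castRingHom ℝ).map_mulVec M m)

variable [DecidableEq ι]

lemma smul_unitTorusProj (M : Matrix ι ι ℤ) (v : ι → ℝ) :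
    M • unitTorusProj v = unitTorusProj (M.map (Int.cast : ℤ → ℝ) *ᵥ v) := by
  ext i
  simp only [Matrix.Module.smul_apply, unitTorusProj_apply, mulVec, dotProduct, map_apply,
    ← zsmul_eq_mul]
  exact (map_sum (QuotientAddGroup.mk' (AddSubgroup.zmultiples (1 : ℝ))) _ _).symm

lemma index_range_mulVecLin {M : Matrix ι ι ℤ} (hM : M.det ≠ 0) :
    M.mulVecLin.range.toAddSubgroup.index = M.det.natAbs := by
  have card_quotient := Submodule.natAbs_det_equiv M.mulVecLin.range
    (LinearEquiv.ofInjective M.mulVecLin (mulVec_injective_of_det_ne_zero hM))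
  rw [← LinearMap.det_toLin']
  exact card_quotient.symm

lemma det_map_intCast_ne_zero {M : Matrix ι ι ℤ} (hM : M.det ≠ 0) :
    (M.map (Int.cast : ℤ → ℝ)).det ≠ 0 := by
  rw [← Int.cast_det]
  exact_mod_cast hM

lemma eq_inv_mulVec_iff {K : Type*} [Field K] {B : Matrix ι ι K} (hB : B.det ≠ 0) {v w : ι → K} :
    v = B⁻¹ *ᵥ w ↔ B *ᵥ v = w := by
  have hu : IsUnit B.det := hB.isUnit
  constructor
  · rintro rfl
    rw [mulVec_mulVec, mul_nonsing_inv B hu, one_mulVec]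
  · rintro rfl
    rw [mulVec_mulVec, nonsing_inv_mul B hu, one_mulVec]

/-- The connecting homomorphism `m ↦ M⁻¹ m mod ℤ^ι` of the snake lemma for multiplication by `M`
on `ℤ^ι → ℝ^ι → (ℝ/ℤ)^ι`. -/
noncomputable def connectingHom (M : Matrix ι ι ℤ) : (ι → ℤ) →+ (ι → UnitAddCircle) :=
  unitTorusProj.comp <|
    ((M.map (Int.cast : ℤ → ℝ))⁻¹.mulVecLin.toAddMonoidHom).comp ((Int.castAddHom ℝ).compLeft ι)

lemma connectingHom_apply (M : Matrix ι ι ℤ) (m : ι → ℤ) :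
    connectingHom M m =
      unitTorusProj ((M.map (Int.cast : ℤ → ℝ))⁻¹ *ᵥ fun i ↦ (m i : ℝ)) :=
  rfl

lemma ker_connectingHom {M : Matrix ι ι ℤ} (hM : M.det ≠ 0) :
    (connectingHom M).ker = M.mulVecLin.range.toAddSubgroup := by
  ext m
  simp only [AddMonoidHom.mem_ker, connectingHom_apply, unitTorusProj_eq_zero_iff,
    eq_inv_mulVec_iff (det_map_intCast_ne_zero hM), ← map_intCast_mulVec,
    Submodule.mem_toAddSubgroup, LinearMap.mem_range, mulVecLin_apply]
  exact exists_congr fun k ↦ by simp only [funext_iff, Int.cast_inj]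

lemma mem_range_connectingHom_iff {M : Matrix ι ι ℤ} (hM : M.det ≠ 0) {x : ι → UnitAddCircle} :
    x ∈ (connectingHom M).range ↔ M • x = 0 := by
  have hB := det_map_intCast_ne_zero hM
  constructor
  · rintro ⟨m, rfl⟩
    rw [connectingHom_apply, smul_unitTorusProj, (eq_inv_mulVec_iff hB).1 rfl,
      unitTorusProj_eq_zero_iff]
    exact ⟨m, rfl⟩
  · intro hx
    obtain ⟨v, rfl⟩ := unitTorusProj_surjective x
    rw [smul_unitTorusProj, unitTorusProj_eq_zero_iff] at hx
    obtain ⟨m, hm⟩ := hx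
    exact ⟨m, by rw [connectingHom_apply, ← (eq_inv_mulVec_iff hB).2 hm.symm]⟩

lemma card_smul_eq_zero {M : Matrix ι ι ℤ} (hM : M.det ≠ 0) :
    Nat.card {x : ι → UnitAddCircle | M • x = 0} = M.det.natAbs := by
  rw [← index_range_mulVecLin hM, ← ker_connectingHom hM, AddSubgroup.index_ker]
  exact Nat.card_congr (Equiv.subtypeEquivRight fun _ ↦ (mem_range_connectingHom_iff hM).symm)

lemma card_smul_eq_self {M : Matrix ι ι ℤ} (hM : (M - 1).det ≠ 0) :
    Nat.card {x : ι → UnitAddCircle | M • x = x} = (M - 1).det.natAbs := by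
  simp only [← card_smul_eq_zero hM, sub_smul, one_smul, sub_eq_zero]

lemma card_smul_eq_neg {M : Matrix ι ι ℤ} (hM : (M + 1).det ≠ 0) :
    Nat.card {x : ι → UnitAddCircle | M • x = -x} = (M + 1).det.natAbs := by
  simp only [← card_smul_eq_zero hM, add_smul, one_smul, add_eq_zero_iff_eq_neg]

end UnitTorus

section NegQuotient

variable {X Y : Type*} [InvolutiveNeg X] {f : X → X} {g : Y → Y} {π : X → Y}

lemma map_eq_self_iff_of_semiconj (hπ : ∀ x x', π x = π x' ↔ x = x' ∨ x = -x')
    (hg : Function.Semiconj π f g) (x : X) : g (π x) = π x ↔ f x = x ∨ f x = -x := by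
  rw [← hg.eq, hπ]

open Finset in
lemma card_fiber_eq_self_add_card_fiber_eq_neg [DecidableEq Y]
    (hf : ∀ x, f (-x) = -f x) (hπ : ∀ x x', π x = π x' ↔ x = x' ∨ x = -x')
    {F N : Finset X} (hF : ∀ x, x ∈ F ↔ f x = x) (hN : ∀ x, x ∈ N ↔ f x = -x)
    {x : X} (hx : f x = x ∨ f x = -x) :
    #{z ∈ F | π z = π x} + #{z ∈ N | π z = π x} = 2 := by
  classical
  have fiber (S : Finset X) : {z ∈ S | π z = π x} = ({x, -x} : Finset X).filter (· ∈ S) := by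
    ext z
    simp [hπ, and_comm]
  rw [fiber F, fiber N]
  by_cases hxx : x = -x
  · simp [← hxx, filter_singleton, hF, hN, show f x = x by grind]
  · rcases hx with h | h <;>
      simp [filter_insert, filter_singleton, hF, hN, hf, h, hxx, Ne.symm hxx, card_pair hxx]

open Finset in
lemma two_mul_card_fixedPoints_of_semiconj
    (hf : ∀ x, f (-x) = -f x) (hπ_surj : Function.Surjective π)
    (hπ : ∀ x x', π x = π x' ↔ x = x' ∨ x = -x') (hg : Function.Semiconj π f g)
    (hself : {x | f x = x}.Finite) (hneg : {x | f x = -x}.Finite) :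
    2 * Nat.card {y | g y = y} = Nat.card {x | f x = x} + Nat.card {x | f x = -x} := by
  classical
  have preimage_fixed : π ⁻¹' {y | g y = y} = {x | f x = x} ∪ {x | f x = -x} :=
    Set.ext (map_eq_self_iff_of_semiconj hπ hg)
  have hfix : {y | g y = y}.Finite :=
    .of_preimage (preimage_fixed ▸ hself.union hneg) hπ_surj
  simp only [Nat.card_coe_set_eq, Set.ncard_eq_toFinset_card _ hfix,
    Set.ncard_eq_toFinset_card _ hself, Set.ncard_eq_toFinset_card _ hneg]
  have self_mapsTo : Set.MapsTo π hself.toFinset hfix.toFinset := fun x hx ↦ by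
    simpa [map_eq_self_iff_of_semiconj hπ hg] using Or.inl (by simpa using hx)
  have neg_mapsTo : Set.MapsTo π hneg.toFinset hfix.toFinset := fun x hx ↦ by
    simpa [map_eq_self_iff_of_semiconj hπ hg] using Or.inr (by simpa using hx)
  rw [card_eq_sum_card_fiberwise self_mapsTo, card_eq_sum_card_fiberwise neg_mapsTo,
    ← sum_add_distrib, mul_comm, ← smul_eq_mul]
  refine (sum_eq_card_nsmul fun y hy ↦ ?_).symm
  obtain ⟨x, rfl⟩ := hπ_surj y
  exact card_fiber_eq_self_add_card_fiber_eq_neg hf hπ (by simp) (by simp)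
    ((map_eq_self_iff_of_semiconj hπ hg x).1 (by simpa using hy))

lemma two_mul_card_fixedPoints_quotient {ι : Type*} [Fintype ι] [DecidableEq ι]
    {M : Matrix ι ι ℤ} (hsub : (M - 1).det ≠ 0) (hadd : (M + 1).det ≠ 0)
    {π : (ι → UnitAddCircle) → Y} (hπ_surj : Function.Surjective π)
    (hπ : ∀ x x', π x = π x' ↔ x = x' ∨ x = -x') (hg : Function.Semiconj π (M • ·) g) :
    2 * Nat.card {y | g y = y} = (M - 1).det.natAbs + (M + 1).det.natAbs := by
  rw [← card_smul_eq_self hsub, ← card_smul_eq_neg hadd]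
  refine two_mul_card_fixedPoints_of_semiconj (smul_neg M) hπ_surj hπ hg ?_ ?_
  · refine Set.finite_of_ncard_ne_zero ?_
    rw [← Nat.card_coe_set_eq, card_smul_eq_self hsub]
    exact Int.natAbs_ne_zero.2 hsub
  · refine Set.finite_of_ncard_ne_zero ?_
    rw [← Nat.card_coe_set_eq, card_smul_eq_neg hadd]
    exact Int.natAbs_ne_zero.2 hadd

end NegQuotient

section FinTwo

variable {R : Type*} [CommRing R]

lemma det_sub_one_fin_two (M : Matrix (Fin 2) (Fin 2) R) :
    (M - 1).det = M.det + 1 - M.trace := by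
  simp only [det_fin_two, trace_fin_two, Matrix.sub_apply, one_apply_eq,
    one_apply_ne zero_ne_one, one_apply_ne one_ne_zero]
  ring

lemma det_add_one_fin_two (M : Matrix (Fin 2) (Fin 2) R) :
    (M + 1).det = M.det + 1 + M.trace := by
  simp only [det_fin_two, trace_fin_two, Matrix.add_apply, one_apply_eq,
    one_apply_ne zero_ne_one, one_apply_ne one_ne_zero]
  ring

lemma trace_pow_add_two_fin_two (M : Matrix (Fin 2) (Fin 2) R) (n : ℕ) :
    (M ^ (n + 2)).trace = M.trace * (M ^ (n + 1)).trace - M.det * (M ^ n).trace := by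
  simp only [pow_succ', trace_fin_two, det_fin_two, mul_apply, Fin.sum_univ_two]
  ring

lemma trace_pow_fin_two {M : Matrix (Fin 2) (Fin 2) R} {a b : R} (htr : M.trace = a + b)
    (hdet : M.det = a * b) (n : ℕ) : (M ^ n).trace = a ^ n + b ^ n := by
  induction n using Nat.twoStepInduction with
  | zero => norm_num [trace_fin_two]
  | one => simpa using htr
  | more n ih ih' =>
    rw [trace_pow_add_two_fin_two, htr, hdet, ih, ih']
    ring

end FinTwo

section Growth

lemma abs_add_inv {K : Type*} [Field K] [LinearOrder K] [IsStrictOrderedRing K] (a : K) :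
    |a + a⁻¹| = |a| + |a|⁻¹ := by
  rw [← abs_inv, abs_add_eq_add_abs_iff]
  rcases le_total 0 a with ha | ha
  · exact Or.inl ⟨ha, inv_nonneg.2 ha⟩
  · exact Or.inr ⟨ha, inv_nonpos.2 ha⟩

lemma two_lt_add_inv {K : Type*} [Field K] [LinearOrder K] [IsStrictOrderedRing K] {a : K}
    (ha : 1 < a) : 2 < a + a⁻¹ := by
  have ha₀ : 0 < a := one_pos.trans ha
  have hsq : a + a⁻¹ - 2 = (a - 1) ^ 2 / a := by
    field_simp
    ring
  have : 0 < (a - 1) ^ 2 / a := div_pos (pow_pos (sub_pos.2 ha) 2) ha₀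
  linarith

lemma tendsto_log_const_mul_pow_div {a c : ℝ} (ha : a ≠ 0) (hc : c ≠ 0) :
    Tendsto (fun n : ℕ ↦ Real.log (a * c ^ n) / n) atTop (𝓝 (Real.log c)) := by
  have hlim : Tendsto (fun n : ℕ ↦ Real.log a / n + Real.log c) atTop (𝓝 (Real.log c)) := by
    simpa using (tendsto_const_div_atTop_nhds_zero_nat (Real.log a)).add_const (Real.log c)
  refine hlim.congr' ?_
  filter_upwards [eventually_ne_atTop 0] with n hn
  rw [Real.log_mul ha (pow_ne_zero n hc), Real.log_pow, add_div,
    mul_div_cancel_left₀ _ (Nat.cast_ne_zero.2 hn)]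

lemma tendsto_log_div_of_le_of_le {a b c : ℝ} {u : ℕ → ℝ} (ha : 0 < a) (hb : b ≠ 0) (hc : 0 < c)
    (hlower : ∀ᶠ n in atTop, a * c ^ n ≤ u n) (hupper : ∀ᶠ n in atTop, u n ≤ b * c ^ n) :
    Tendsto (fun n : ℕ ↦ Real.log (u n) / n) atTop (𝓝 (Real.log c)) := by
  refine tendsto_of_tendsto_of_tendsto_of_le_of_le' (tendsto_log_const_mul_pow_div ha.ne' hc.ne')
    (tendsto_log_const_mul_pow_div hb hc.ne') ?_ ?_
  · filter_upwards [hlower] with n hn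
    gcongr
  · filter_upwards [hlower, hupper] with n hn hn'
    have : 0 < u n := (by positivity : 0 < a * c ^ n).trans_le hn
    gcongr

end Growth

section Hyperbolic

variable {M : Matrix (Fin 2) (Fin 2) ℤ} {lam : ℝ} {Y : Type*}
  {π : (Fin 2 → UnitAddCircle) → Y} {g : Y → Y}

lemma abs_trace_pow_of_det_eq_one (hdet : M.det = 1) (hlam : lam ≠ 0)
    (htr : (M.trace : ℝ) = lam + lam⁻¹) (n : ℕ) :
    |((M ^ n).trace : ℝ)| = |lam| ^ n + (|lam| ^ n)⁻¹ := by
  have htr' : (M.map (Int.castRingHom ℝ)).trace = lam + lam⁻¹ := by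
    rw [← htr, trace_fin_two, trace_fin_two]
    simp
  have hdet' : (M.map (Int.castRingHom ℝ)).det = lam * lam⁻¹ := by
    rw [mul_inv_cancel₀ hlam, ← RingHom.mapMatrix_apply, ← RingHom.map_det, hdet, map_one]
  have htrace : ((M ^ n).trace : ℝ) = lam ^ n + (lam ^ n)⁻¹ := by
    rw [← inv_pow, ← trace_pow_fin_two htr' hdet', ← Matrix.map_pow]
    simp [trace_fin_two]
  rw [htrace, abs_add_inv, abs_pow]

lemma card_fixedPoints_quotient_eq_natAbs_trace (hdet : M.det = 1) (htr : 2 < |M.trace|)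
    (hπ_surj : Function.Surjective π) (hπ : ∀ x x', π x = π x' ↔ x = x' ∨ x = -x')
    (hg : Function.Semiconj π (M • ·) g) : Nat.card {y | g y = y} = M.trace.natAbs := by
  have hsub : (M - 1).det = 2 - M.trace := by rw [det_sub_one_fin_two, hdet]; norm_num
  have hadd : (M + 1).det = 2 + M.trace := by rw [det_add_one_fin_two, hdet]; norm_num
  have count := two_mul_card_fixedPoints_quotient (by rw [hsub]; grind) (by rw [hadd]; grind)
    hπ_surj hπ hg
  rw [hsub, hadd] at count
  grind

lemma card_periodicPoints_quotient (hdet : M.det = 1) (hlam : 1 < |lam|)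
    (htr : (M.trace : ℝ) = lam + lam⁻¹) (hπ_surj : Function.Surjective π)
    (hπ : ∀ x x', π x = π x' ↔ x = x' ∨ x = -x') (hg : Function.Semiconj π (M • ·) g)
    {n : ℕ} (hn : n ≠ 0) :
    (Nat.card {y | g^[n] y = y} : ℝ) = |lam| ^ n + (|lam| ^ n)⁻¹ := by
  have hlam₀ : lam ≠ 0 := abs_pos.1 (one_pos.trans hlam)
  have habs := abs_trace_pow_of_det_eq_one hdet hlam₀ htr n
  have htwo : 2 < |(M ^ n).trace| := by
    have := two_lt_add_inv (one_lt_pow₀ hlam hn)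
    rw [← habs] at this
    exact_mod_cast this
  have hgn : Function.Semiconj π (M ^ n • ·) g^[n] := by
    rw [← smul_iterate]
    exact hg.iterate_right n
  rw [card_fixedPoints_quotient_eq_natAbs_trace (by rw [det_pow, hdet, one_pow]) htwo
    hπ_surj hπ hgn, Nat.cast_natAbs, Int.cast_abs, habs]

lemma tendsto_log_card_periodicPoints_quotient (hdet : M.det = 1) (hlam : 1 < |lam|)
    (htr : (M.trace : ℝ) = lam + lam⁻¹) (hπ_surj : Function.Surjective π)
    (hπ : ∀ x x', π x = π x' ↔ x = x' ∨ x = -x') (hg : Function.Semiconj π (M • ·) g) :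
    Tendsto (fun n : ℕ ↦ Real.log (Nat.card {y | g^[n] y = y}) / n) atTop
      (𝓝 (Real.log |lam|)) := by
  have hcard : ∀ᶠ n : ℕ in atTop,
      (Nat.card {y | g^[n] y = y} : ℝ) = |lam| ^ n + (|lam| ^ n)⁻¹ := by
    filter_upwards [eventually_ne_atTop 0] with n hn
    exact card_periodicPoints_quotient hdet hlam htr hπ_surj hπ hg hn
  refine tendsto_log_div_of_le_of_le one_pos two_ne_zero (one_pos.trans hlam) ?_ ?_
  · filter_upwards [hcard] with n hn
    rw [hn, one_mul]
    exact le_add_of_nonneg_right (by positivity)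
  · filter_upwards [hcard] with n hn
    have hpow : 1 ≤ |lam| ^ n := one_le_pow₀ hlam.le
    rw [hn, two_mul]
    gcongr
    exact (inv_le_one_of_one_le₀ hpow).trans hpow

end Hyperbolic

lemma semiconj_finTwoArrow {A : Matrix.SpecialLinearGroup (Fin 2) ℤ} {f : Torus → Torus}
    (hf : ∀ v : ℝ × ℝ, f (torusMk v) = torusMk (matAct A v)) :
    Function.Semiconj (LinearEquiv.finTwoArrow ℤ UnitAddCircle) (A.1 • ·) f := by
  intro x
  obtain ⟨v, rfl⟩ := unitTorusProj_surjective x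
  refine Eq.trans ?_ (hf (v 0, v 1)).symm
  simp [smul_unitTorusProj, torusMk, matAct, unitTorusProj_apply]

theorem growth_rate_periodic_points_quotient_general
    {A : Matrix.SpecialLinearGroup (Fin 2) ℤ} {lam : ℝ} (hlam : 1 < |lam|)
    (htr : (A.1.trace : ℝ) = lam + lam⁻¹)
    {f : Torus → Torus} (hf : ∀ v : ℝ × ℝ, f (torusMk v) = torusMk (matAct A v))
    {Y : Type*} {π : Torus → Y} (hπ_surj : Function.Surjective π)
    (hπ : ∀ x x' : Torus, π x = π x' ↔ x = x' ∨ x = -x')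
    {g : Y → Y} (hg : Function.Semiconj π f g) :
    Tendsto (fun n : ℕ ↦ Real.log (Nat.card {y | g^[n] y = y}) / n) atTop
      (𝓝 (Real.log |lam|)) := by
  let e := LinearEquiv.finTwoArrow ℤ UnitAddCircle
  refine tendsto_log_card_periodicPoints_quotient (π := π ∘ e) A.2 hlam htr
    (hπ_surj.comp e.surjective) (fun x x' ↦ ?_) (hg.comp_left (semiconj_finTwoArrow hf))
  rw [Function.comp_apply, Function.comp_apply, hπ, ← map_neg, e.injective.eq_iff,
    e.injective.eq_iff]

open Filter in
/-- `lim_{n→∞} (log Per_n(g_A))/n = log λ`. -/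
theorem growth_rate_periodic_points_quotient
    (A : Matrix.SpecialLinearGroup (Fin 2) ℤ)
    (lam : ℝ) (hlam : 1 < lam)
    (htr : ((A.1 0 0 : ℤ) : ℝ) + ((A.1 1 1 : ℤ) : ℝ) = lam + lam⁻¹)
    (fA : Torus ≃ₜ Torus)
    (hfA : ∀ v : ℝ × ℝ, fA (torusMk v) = torusMk (matAct A v))
    (S2 : Type) [MetricSpace S2] [CompactSpace S2]
    (π : Torus → S2) (hπcont : Continuous π) (hπsurj : Function.Surjective π)
    (hπ : ∀ x y : Torus, π x = π y ↔ (x = y ∨ x = -y))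
    (gA : S2 ≃ₜ S2) (hgA : ∀ x : Torus, gA (π x) = π (fA x)) :
    Tendsto (fun n : ℕ => Real.log (Nat.card {y : S2 | gA^[n] y = y}) / n)
      atTop (nhds (Real.log lam)) := by
  simpa using growth_rate_periodic_points_quotient_general (hlam.trans_le (le_abs_self lam))
    (by rw [trace_fin_two]; exact_mod_cast htr) hfA hπsurj hπ (fun x ↦ (hgA x).symm)
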